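/- For every generator s ∈ S and every word v ∈ ℤ^m with s(v) ≠ v, the words v and s(v) differ in exactly one coordinate, the differing coordinate of s(v) exceeds that of v by 1, and the section s|_v is the identity automorphism (so that s(vi) = s(v)i for every letter i ∈ ℤ). -/

import Mathlib

/-- States of the kneading automaton: `a i` is the paper's `a_{i+1}` (for `i < k`),
`b i` is the paper's `b_{i+1}` (for `i < p`), and `id` is the identity state. -/
inductive KState : Type
  | a (i : ℕ)
  | b (i : ℕ)
  | id
  deriving DecidableEq

/-- Transition function of the kneading automaton `𝒦(x₁…x_k, y₁…y_p)`, where the paper's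
`x_i` is `x (i-1)` and `y_i` is `y (i-1)`.  `KTrans k p x y s z = (output letter, restriction)`. -/
def KTrans (k p : ℕ) (x y : ℕ → ℤ) : KState → ℤ → ℤ × KState
  | .a 0, z => (z + 1, .id)
  | .a (i+1), z => if z = x i then (z, .a i) else (z, .id)
  | .b 0, z =>
      if z = x (k-1) then (z, .a (k-1))
      else if z = y (p-1) then (z, .b (p-1))
      else (z, .id)
  | .b (i+1), z => if z = y i then (z, .b i) else (z, .id)
  | .id, z => (z, .id)

/-- The action of a state on the tree `ℤ*` of finite words over `ℤ`,
defined recursively by `q(zv) = q(z)·(q|_z)(v)`. -/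
def stateAct (k p : ℕ) (x y : ℕ → ℤ) : KState → List ℤ → List ℤ
  | _, [] => []
  | s, z :: v => (KTrans k p x y s z).1 :: stateAct k p x y (KTrans k p x y s z).2 v

/-- The generating states `S = {a₁,…,a_k, b₁,…,b_p}`. -/
def IsGen (k p : ℕ) (s : KState) : Prop :=
  (∃ i, i < k ∧ s = .a i) ∨ (∃ j, j < p ∧ s = .b j)

/-- The generators of the kneading group, as permutations of `List ℤ` whose underlying
function is the action of a generating state. -/
def SGens (k p : ℕ) (x y : ℕ → ℤ) : Set (Equiv.Perm (List ℤ)) :=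
  {g | ∃ s : KState, IsGen k p s ∧ ⇑g = stateAct k p x y s}

/-- The kneading group `K = 𝕂(x₁…x_k, y₁…y_p)`. -/
def Kgroup (k p : ℕ) (x y : ℕ → ℤ) : Subgroup (Equiv.Perm (List ℤ)) :=
  Subgroup.closure (SGens k p x y)

theorem stateAct_id (k p : ℕ) (x y : ℕ → ℤ) (v : List ℤ) :
    stateAct k p x y .id v = v := by
  induction v with
  | nil => rfl
  | cons z v ih => simp [stateAct, KTrans, ih]

theorem KTrans_cases (k p : ℕ) (x y : ℕ → ℤ) (s : KState) (z : ℤ) :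
    KTrans k p x y s z = (z + 1, .id) ∨ (KTrans k p x y s z).1 = z := by
  rcases s with (_ | i) | (_ | i) | _
  · left; rfl
  all_goals
    right
    simp only [KTrans]
    try split_ifs <;> rfl

theorem stateAct_main (k p : ℕ) (x y : ℕ → ℤ) (v : List ℤ) :
    ∀ s : KState, stateAct k p x y s v ≠ v →
      (∃ j : ℕ, j < v.length ∧
        stateAct k p x y s v = v.set j (v.getD j 0 + 1)) ∧
      (∀ w : List ℤ, stateAct k p x y s (v ++ w) = stateAct k p x y s v ++ w) := by
  induction v with
  | nil => intro s h; exact absurd rfl h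
  | cons z v ih =>
    intro s h
    rcases KTrans_cases k p x y s z with h1 | h1
    · refine ⟨⟨0, by simp, ?_⟩, fun w => ?_⟩
      · simp [stateAct, h1, stateAct_id]
      · simp [stateAct, h1, stateAct_id]
    · have h2 : stateAct k p x y (KTrans k p x y s z).2 v ≠ v := by
        intro h3
        exact h (by simp [stateAct, h1, h3])
      obtain ⟨⟨j, hj, e⟩, hw⟩ := ih _ h2
      refine ⟨⟨j + 1, by simpa using hj, ?_⟩, fun w => ?_⟩
      · simp only [stateAct, h1, e, List.set_cons_succ, List.getD_cons_succ]
      · simp only [List.cons_append, stateAct, hw w]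

theorem stmt18 (k p : ℕ) (hk : 1 ≤ k) (hp : 1 ≤ p) (x y : ℕ → ℤ)
    (hxy : x (k - 1) ≠ y (p - 1)) :
    ∀ (s : KState) (v : List ℤ), IsGen k p s → stateAct k p x y s v ≠ v →
      (∃ j : ℕ, j < v.length ∧
        stateAct k p x y s v = v.set j (v.getD j 0 + 1)) ∧
      (∀ w : List ℤ, stateAct k p x y s (v ++ w) = stateAct k p x y s v ++ w) := by
  exact fun s v _ h => stateAct_main k p x y v s h
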